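/- Fix 1 < γ ≤ 2 and let β > 0 satisfy 1/β + 1/γ = 1. Let φ(t) = |t|^γ/γ, let X = {X(t), t ∈ [0,T]} and X_N = {X_N(t), t ∈ [0,T]} be jointly measurable stochastic processes with X(t) − X_N(t) ∈ Sub_φ(Ω) for every t, and fix p ≥ 1, δ > 0, α ∈ (0,1). Suppose c_N = ∫₀^T (τ_φ(X(t) − X_N(t)))^p dt < ∞. If c_N ≤ δ / (β ln(2/α))^{p/β} and c_N < δ / p^{p(1 − 1/γ)}, then P{ ∫₀^T |X(t) − X_N(t)|^p dt > δ } ≤ α. -/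

import Mathlib

open MeasureTheory Filter Set ProbabilityTheory

noncomputable section

/-- The set of admissible sub-φ constants of a random variable. -/
def subPhiBounds {Ω : Type*} [MeasurableSpace Ω] (P : Measure Ω) (φ : ℝ → ℝ) (ξ : Ω → ℝ) :
    Set ℝ :=
  {a | 0 < a ∧ ∀ l : ℝ, ∫ ω, Real.exp (l * ξ ω) ∂P ≤ Real.exp (φ (a * l))}

/-- `ξ ∈ Sub_φ(Ω)`. -/
def IsSubPhi {Ω : Type*} [MeasurableSpace Ω] (P : Measure Ω) (φ : ℝ → ℝ) (ξ : Ω → ℝ) : Prop :=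
  Measurable ξ ∧ (∫ ω, ξ ω ∂P) = 0 ∧
    (∀ l : ℝ, Integrable (fun ω => Real.exp (l * ξ ω)) P) ∧
    (subPhiBounds P φ ξ).Nonempty

/-- The φ-sub-Gaussian standard `τ_φ(ξ)`. -/
def tauPhi {Ω : Type*} [MeasurableSpace Ω] (P : Measure Ω) (φ : ℝ → ℝ) (ξ : Ω → ℝ) : ℝ :=
  sInf (subPhiBounds P φ ξ)

/-- An N-Orlicz function. -/
def IsNOrlicz (φ : ℝ → ℝ) : Prop :=
  Continuous φ ∧ (∀ x, φ (-x) = φ x) ∧ ConvexOn ℝ Set.univ φ ∧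
    StrictMonoOn φ (Set.Ioi 0) ∧ φ 0 = 0 ∧ (∀ x ≠ 0, 0 < φ x) ∧
    Tendsto (fun x => φ x / x) (nhdsWithin 0 (Set.Ioi 0)) (nhds 0) ∧
    Tendsto (fun x => φ x / x) atTop atTop

/-- The Young–Fenchel transform `φ*`. -/
def youngFenchel (φ : ℝ → ℝ) (x : ℝ) : ℝ := ⨆ y : ℝ, (x * y - φ y)

/-- The function `φ(t) = t²/γ` for `|t| < 1`, `|t|^γ/γ` for `|t| ≥ 1`. -/
def phiGamma (γ : ℝ) : ℝ → ℝ := fun x => if |x| < 1 then x ^ 2 / γ else |x| ^ γ / γ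

/-!
Optimising the bound `|x| ^ r ≤ (r / (e l)) ^ r e ^ (l |x|)` over `l > 0` shows that the `r`-th
absolute moment of a variable with standard `τ` is at most `2 (r / e) ^ (r / β) τ ^ r`. For
`s = r / p ≥ 1`, Minkowski's integral inequality in `L_s` transfers this to the process: the `s`-th
moment of `∫ |Y_t| ^ p dμ` is at most `2 (r / e) ^ (r / β) (∫ τ_φ(Y_t) ^ p dμ) ^ s`. Markov's
inequality then gives `P (∫ |Y_t| ^ p dμ ≥ δ) ≤ 2 exp (-r / β)` whenever `p ≤ r` and
`∫ τ_φ(Y_t) ^ p dμ ≤ δ / r ^ (p / β)`. The two bounds on `c_N` are the second condition for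
`r = p` and `r = β log (2 / α)`; for the larger of the two also `2 exp (-r / β) ≤ α`.
-/

open scoped ENNReal

section Minkowski

variable {S Ω : Type*} [MeasurableSpace S] [MeasurableSpace Ω] {μ : Measure S} {ν : Measure Ω}

lemma lintegral_rpow_le_lintegral_rpow_mul_rpow_mul {g w : S → ℝ≥0∞} (hg : AEMeasurable g μ)
    (hw : AEMeasurable w μ) (hw_top : ∀ᵐ t ∂μ, w t ≠ ∞) (hgw : ∀ᵐ t ∂μ, w t = 0 → g t = 0)
    {s : ℝ} (hs : 1 ≤ s) :
    (∫⁻ t, g t ∂μ) ^ s ≤ (∫⁻ t, g t ^ s * w t ^ (1 - s) ∂μ) * (∫⁻ t, w t ∂μ) ^ (s - 1) := by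
  have hs0 : 0 < s := by linarith
  have hfactor : ∀ᵐ t ∂μ, g t = (g t ^ s * w t ^ (1 - s)) ^ (1 / s) * w t ^ (1 - 1 / s) := by
    filter_upwards [hw_top, hgw] with t ht_top ht_zero
    rcases eq_or_ne (w t) 0 with h0 | h0
    · simp [ht_zero h0, hs0]
    · have hexp : (1 - s) * (1 / s) + (1 - 1 / s) = 0 := by field_simp; ring
      rw [ENNReal.mul_rpow_of_nonneg _ _ (by positivity), ← ENNReal.rpow_mul, ← ENNReal.rpow_mul,
        mul_assoc, ← ENNReal.rpow_add _ _ h0 ht_top, hexp, mul_one_div_cancel hs0.ne']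
      simp
  have hholder : ∫⁻ t, g t ∂μ ≤
      (∫⁻ t, g t ^ s * w t ^ (1 - s) ∂μ) ^ (1 / s) * (∫⁻ t, w t ∂μ) ^ (1 - 1 / s) := by
    rw [lintegral_congr_ae hfactor]
    exact ENNReal.lintegral_mul_norm_pow_le ((hg.pow_const s).mul (hw.pow_const _)) hw
      (by positivity) (sub_nonneg.2 ((div_le_one hs0).2 hs)) (by ring)
  calc (∫⁻ t, g t ∂μ) ^ s
      ≤ ((∫⁻ t, g t ^ s * w t ^ (1 - s) ∂μ) ^ (1 / s) * (∫⁻ t, w t ∂μ) ^ (1 - 1 / s)) ^ s :=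
        ENNReal.rpow_le_rpow hholder hs0.le
    _ = (∫⁻ t, g t ^ s * w t ^ (1 - s) ∂μ) * (∫⁻ t, w t ∂μ) ^ (s - 1) := by
        rw [ENNReal.mul_rpow_of_nonneg _ _ hs0.le, ← ENNReal.rpow_mul, ← ENNReal.rpow_mul,
          one_div_mul_cancel hs0.ne', ENNReal.rpow_one, sub_mul, one_div_mul_cancel hs0.ne',
          one_mul]

lemma ae_ae_eq_zero_of_lintegral_rpow_eq_zero [SFinite μ] [SFinite ν] {f : S → Ω → ℝ≥0∞}
    (hf : Measurable (Function.uncurry f)) {s : ℝ} (hs : 0 < s) :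
    ∀ᵐ ω ∂ν, ∀ᵐ t ∂μ, ∫⁻ ω', f t ω' ^ s ∂ν = 0 → f t ω = 0 := by
  have hnorm : Measurable fun t => ∫⁻ ω, f t ω ^ s ∂ν := (hf.pow_const s).lintegral_prod_right'
  have hset : MeasurableSet {x : S × Ω | ∫⁻ ω', f x.1 ω' ^ s ∂ν = 0 → f x.1 x.2 = 0} :=
    (measurableSet_eq_fun (hnorm.comp measurable_fst) measurable_const).imp
      (measurableSet_eq_fun hf measurable_const)
  refine (Measure.ae_ae_comm hset).1 (ae_of_all _ fun t => ?_)
  by_cases h : ∫⁻ ω', f t ω' ^ s ∂ν = 0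
  · have hft : Measurable fun ω => f t ω ^ s := hf.of_uncurry_left.pow_const s
    filter_upwards [(lintegral_eq_zero_iff hft).1 h] with ω hω _
    exact (ENNReal.rpow_eq_zero_iff_of_pos hs).1 hω
  · exact ae_of_all _ fun ω h' => absurd h' h

lemma lintegral_lintegral_rpow_le [SFinite μ] [SFinite ν] {f : S → Ω → ℝ≥0∞}
    (hf : Measurable (Function.uncurry f)) {s : ℝ} (hs : 1 ≤ s) :
    ∫⁻ ω, (∫⁻ t, f t ω ∂μ) ^ s ∂ν ≤ (∫⁻ t, (∫⁻ ω, f t ω ^ s ∂ν) ^ (1 / s) ∂μ) ^ s := by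
  have hs0 : 0 < s := by linarith
  set w : S → ℝ≥0∞ := fun t => (∫⁻ ω, f t ω ^ s ∂ν) ^ (1 / s) with hw_def
  have hw : Measurable w := (hf.pow_const s).lintegral_prod_right'.pow_const _
  have hws (t : S) : w t ^ s = ∫⁻ ω, f t ω ^ s ∂ν := by
    rw [hw_def, ← ENNReal.rpow_mul, one_div_mul_cancel hs0.ne', ENNReal.rpow_one]
  set W := ∫⁻ t, w t ∂μ
  rcases eq_or_ne W ∞ with hW | hW
  · simp [hW, hs0]
  have hpointwise : ∀ᵐ ω ∂ν,
      (∫⁻ t, f t ω ∂μ) ^ s ≤ (∫⁻ t, f t ω ^ s * w t ^ (1 - s) ∂μ) * W ^ (s - 1) := by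
    filter_upwards [ae_ae_eq_zero_of_lintegral_rpow_eq_zero (μ := μ) (ν := ν) hf hs0] with ω hω
    refine lintegral_rpow_le_lintegral_rpow_mul_rpow_mul hf.of_uncurry_right.aemeasurable
      hw.aemeasurable ((ae_lt_top hw hW).mono fun _ h => h.ne) (hω.mono fun t h h0 => h ?_) hs
    rw [← hws t, h0, ENNReal.zero_rpow_of_pos hs0]
  have hmeas : Measurable fun x : Ω × S => f x.2 x.1 ^ s * w x.2 ^ (1 - s) :=
    ((hf.comp measurable_swap).pow_const s).mul ((hw.comp measurable_snd).pow_const _)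
  have hweight (t : S) : ∫⁻ ω, f t ω ^ s * w t ^ (1 - s) ∂ν ≤ w t := by
    rw [lintegral_mul_const _ (hf.of_uncurry_left.pow_const s), ← hws t]
    rcases eq_or_ne (w t) 0 with h0 | h0
    · simp [h0, hs0]
    rcases eq_or_ne (w t) ∞ with htop | htop
    · simp [htop]
    · rw [← ENNReal.rpow_add _ _ h0 htop, add_sub_cancel, ENNReal.rpow_one]
  calc ∫⁻ ω, (∫⁻ t, f t ω ∂μ) ^ s ∂ν
      ≤ ∫⁻ ω, (∫⁻ t, f t ω ^ s * w t ^ (1 - s) ∂μ) * W ^ (s - 1) ∂ν :=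
        lintegral_mono_ae hpointwise
    _ = (∫⁻ ω, ∫⁻ t, f t ω ^ s * w t ^ (1 - s) ∂μ ∂ν) * W ^ (s - 1) :=
        lintegral_mul_const _ hmeas.lintegral_prod_right'
    _ = (∫⁻ t, ∫⁻ ω, f t ω ^ s * w t ^ (1 - s) ∂ν ∂μ) * W ^ (s - 1) := by
        rw [lintegral_lintegral_swap hmeas.aemeasurable]
    _ ≤ W * W ^ (s - 1) := by
        gcongr
        exact lintegral_mono hweight
    _ = W ^ s := by
        nth_rw 1 [← ENNReal.rpow_one W]
        rw [← ENNReal.rpow_add_of_nonneg _ _ zero_le_one (by linarith), add_sub_cancel]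

end Minkowski

section Moments

variable {Ω : Type*} [MeasurableSpace Ω] {P : Measure Ω} {ξ : Ω → ℝ} {γ β r : ℝ}

lemma abs_rpow_le_mul_exp_mul_abs (x : ℝ) {l : ℝ} (hr : 0 < r) (hl : 0 < l) :
    |x| ^ r ≤ (r / (Real.exp 1 * l)) ^ r * Real.exp (l * |x|) := by
  have hbase : |x| ≤ r / (Real.exp 1 * l) * Real.exp (l * |x| / r) := by
    have h := Real.mul_exp_neg_le_exp_neg_one (l * |x| / r)
    rw [Real.exp_neg, Real.exp_neg, ← div_eq_mul_inv, div_le_iff₀ (Real.exp_pos _)] at h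
    calc |x| = r / l * (l * |x| / r) := by field_simp
      _ ≤ r / l * ((Real.exp 1)⁻¹ * Real.exp (l * |x| / r)) := by gcongr
      _ = r / (Real.exp 1 * l) * Real.exp (l * |x| / r) := by field_simp
  calc |x| ^ r ≤ (r / (Real.exp 1 * l) * Real.exp (l * |x| / r)) ^ r :=
        Real.rpow_le_rpow (abs_nonneg x) hbase hr.le
    _ = (r / (Real.exp 1 * l)) ^ r * Real.exp (l * |x|) := by
        rw [Real.mul_rpow (by positivity) (by positivity), ← Real.exp_mul,
          div_mul_cancel₀ _ hr.ne']

lemma lintegral_enorm_rpow_le_mgf_add_mgf {l : ℝ} (hr : 0 < r) (hl : 0 < l)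
    (hpos : Integrable (fun ω => Real.exp (l * ξ ω)) P)
    (hneg : Integrable (fun ω => Real.exp (-l * ξ ω)) P) :
    ∫⁻ ω, ‖ξ ω‖ₑ ^ r ∂P ≤
      ENNReal.ofReal ((r / (Real.exp 1 * l)) ^ r * (mgf ξ P l + mgf ξ P (-l))) := by
  set K : ℝ := (r / (Real.exp 1 * l)) ^ r
  have hpointwise (ω : Ω) :
      |ξ ω| ^ r ≤ K * (Real.exp (l * ξ ω) + Real.exp (-l * ξ ω)) := by
    refine (abs_rpow_le_mul_exp_mul_abs (ξ ω) hr hl).trans ?_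
    gcongr
    simpa only [abs_mul, abs_of_pos hl, neg_mul] using Real.exp_abs_le (l * ξ ω)
  calc ∫⁻ ω, ‖ξ ω‖ₑ ^ r ∂P
      ≤ ∫⁻ ω, ENNReal.ofReal (K * (Real.exp (l * ξ ω) + Real.exp (-l * ξ ω))) ∂P := by
        refine lintegral_mono fun ω => ?_
        rw [Real.enorm_eq_ofReal_abs, ENNReal.ofReal_rpow_of_nonneg (abs_nonneg _) hr.le]
        exact ENNReal.ofReal_le_ofReal (hpointwise ω)
    _ = ENNReal.ofReal (K * (mgf ξ P l + mgf ξ P (-l))) := by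
        have hint : Integrable
            (fun ω => K * (Real.exp (l * ξ ω) + Real.exp (-l * ξ ω))) P :=
          (hpos.add hneg).const_mul K
        rw [← ofReal_integral_eq_lintegral_ofReal hint (ae_of_all _ fun ω => by positivity),
          integral_const_mul, integral_add hpos hneg]
        rfl

/- At `l = r ^ γ⁻¹ / a` the function `l ↦ (r / (e l)) ^ r * exp ((a l) ^ γ / γ)` is minimal, and
there `(a l) ^ γ = r`. -/
lemma div_exp_one_mul_rpow_mul_exp (hγβ : γ.HolderConjugate β) (hr : 0 < r) {a : ℝ}
    (ha : 0 < a) :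
    (r / (Real.exp 1 * (r ^ γ⁻¹ / a))) ^ r * Real.exp (r / γ) =
      (r / Real.exp 1) ^ (r / β) * a ^ r := by
  have hbase : r / (Real.exp 1 * (r ^ γ⁻¹ / a)) = r ^ β⁻¹ / Real.exp 1 * a := by
    rw [← hγβ.one_sub_inv, Real.rpow_sub hr, Real.rpow_one]
    field_simp
  have hrγ : r / γ = r - r / β := by
    rw [div_eq_mul_inv, div_eq_mul_inv, ← hγβ.one_sub_inv]; ring
  rw [hbase, hrγ, Real.mul_rpow (by positivity) ha.le, Real.div_rpow (by positivity)
    (by positivity), Real.div_rpow hr.le (by positivity), ← Real.rpow_mul hr.le,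
    inv_mul_eq_div, Real.exp_one_rpow, Real.exp_one_rpow, Real.exp_sub]
  field_simp

lemma lintegral_enorm_rpow_le_of_mem_subPhiBounds (hγβ : γ.HolderConjugate β)
    (hexp : ∀ l : ℝ, Integrable (fun ω => Real.exp (l * ξ ω)) P) (hr : 0 < r) {a : ℝ}
    (ha : a ∈ subPhiBounds P (fun x => |x| ^ γ / γ) ξ) :
    ∫⁻ ω, ‖ξ ω‖ₑ ^ r ∂P ≤
      ENNReal.ofReal (2 * (r / Real.exp 1) ^ (r / β)) * ENNReal.ofReal a ^ r := by
  obtain ⟨ha0, hmgf⟩ := ha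
  set l : ℝ := r ^ γ⁻¹ / a with hl_def
  have hl : 0 < l := by positivity
  have hphi : (a * l) ^ γ / γ = r / γ := by
    rw [hl_def, mul_div_cancel₀ _ ha0.ne', Real.rpow_inv_rpow hr.le hγβ.ne_zero]
  have hmgf_pos : mgf ξ P l ≤ Real.exp (r / γ) := by
    simpa only [mgf, abs_of_pos (mul_pos ha0 hl), hphi] using hmgf l
  have hmgf_neg : mgf ξ P (-l) ≤ Real.exp (r / γ) := by
    simpa only [mgf, mul_neg, abs_neg, abs_of_pos (mul_pos ha0 hl), hphi] using hmgf (-l)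
  calc ∫⁻ ω, ‖ξ ω‖ₑ ^ r ∂P
      ≤ ENNReal.ofReal ((r / (Real.exp 1 * l)) ^ r * (mgf ξ P l + mgf ξ P (-l))) :=
        lintegral_enorm_rpow_le_mgf_add_mgf hr hl (hexp l) (hexp (-l))
    _ ≤ ENNReal.ofReal (2 * ((r / (Real.exp 1 * l)) ^ r * Real.exp (r / γ))) := by
        rw [mul_left_comm, two_mul]
        gcongr
    _ = ENNReal.ofReal (2 * (r / Real.exp 1) ^ (r / β)) * ENNReal.ofReal a ^ r := by
        rw [div_exp_one_mul_rpow_mul_exp hγβ hr ha0, ← mul_assoc,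
          ENNReal.ofReal_mul (by positivity), ENNReal.ofReal_rpow_of_pos ha0]

lemma tauPhi_nonneg (P : Measure Ω) (φ : ℝ → ℝ) (ξ : Ω → ℝ) : 0 ≤ tauPhi P φ ξ :=
  Real.sInf_nonneg fun _ ha => ha.1.le

lemma IsSubPhi.lintegral_enorm_rpow_le (hγβ : γ.HolderConjugate β)
    (hξ : IsSubPhi P (fun x => |x| ^ γ / γ) ξ) (hr : 0 < r) :
    ∫⁻ ω, ‖ξ ω‖ₑ ^ r ∂P ≤ ENNReal.ofReal (2 * (r / Real.exp 1) ^ (r / β)) *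
      ENNReal.ofReal (tauPhi P (fun x => |x| ^ γ / γ) ξ) ^ r := by
  obtain ⟨-, -, hexp, hne⟩ := hξ
  obtain ⟨a, -, ha_lim, ha⟩ := exists_seq_tendsto_sInf hne ⟨0, fun _ h => h.1.le⟩
  refine ge_of_tendsto' (x := atTop) ?_ fun n =>
    lintegral_enorm_rpow_le_of_mem_subPhiBounds hγβ hexp hr (ha n)
  exact ENNReal.Tendsto.const_mul ((ENNReal.tendsto_ofReal ha_lim).ennrpow_const r)
    (Or.inr ENNReal.ofReal_ne_top)

end Moments

lemma ofReal_integral_abs_rpow_le_lintegral_enorm_rpow {S : Type*} [MeasurableSpace S]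
    (μ : Measure S) (g : S → ℝ) {p : ℝ} (hp : 0 ≤ p) :
    ENNReal.ofReal (∫ t, |g t| ^ p ∂μ) ≤ ∫⁻ t, ‖g t‖ₑ ^ p ∂μ :=
  calc ENNReal.ofReal (∫ t, |g t| ^ p ∂μ)
      ≤ ‖∫ t, |g t| ^ p ∂μ‖ₑ := Real.ofReal_le_enorm _
    _ ≤ ∫⁻ t, ‖|g t| ^ p‖ₑ ∂μ := enorm_integral_le_lintegral_enorm _
    _ = ∫⁻ t, ‖g t‖ₑ ^ p ∂μ := by
        simp only [Real.enorm_rpow_of_nonneg (abs_nonneg _) hp, Real.enorm_abs]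

section Tail

variable {S Ω : Type*} [MeasurableSpace S] [MeasurableSpace Ω] {μ : Measure S} [SFinite μ]
  {P : Measure Ω} [SFinite P] {γ β p r δ : ℝ} {Y : S → Ω → ℝ}

lemma lintegral_lintegral_enorm_rpow_rpow_le (hγβ : γ.HolderConjugate β)
    (hY : Measurable (Function.uncurry Y))
    (hsub : ∀ᵐ t ∂μ, IsSubPhi P (fun x => |x| ^ γ / γ) (Y t)) (hp : 0 < p) (hpr : p ≤ r) :
    ∫⁻ ω, (∫⁻ t, ‖Y t ω‖ₑ ^ p ∂μ) ^ (r / p) ∂P ≤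
      ENNReal.ofReal (2 * (r / Real.exp 1) ^ (r / β)) *
        (∫⁻ t, ENNReal.ofReal (tauPhi P (fun x => |x| ^ γ / γ) (Y t)) ^ p ∂μ) ^ (r / p) := by
  have hr : 0 < r := hp.trans_le hpr
  have hs0 : 0 < r / p := by positivity
  set C := ENNReal.ofReal (2 * (r / Real.exp 1) ^ (r / β))
  set τ : S → ℝ≥0∞ := fun t => ENNReal.ofReal (tauPhi P (fun x => |x| ^ γ / γ) (Y t))
  have hmoment : ∀ᵐ t ∂μ,
      (∫⁻ ω, (‖Y t ω‖ₑ ^ p) ^ (r / p) ∂P) ^ (1 / (r / p)) ≤ C ^ (1 / (r / p)) * τ t ^ p := by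
    filter_upwards [hsub] with t ht
    have hτ : τ t ^ p = (τ t ^ r) ^ (1 / (r / p)) := by
      rw [← ENNReal.rpow_mul, one_div_div, mul_div_cancel₀ _ hr.ne']
    simp only [← ENNReal.rpow_mul, mul_div_cancel₀ _ hp.ne']
    rw [hτ, ← ENNReal.mul_rpow_of_nonneg _ _ (by positivity)]
    exact ENNReal.rpow_le_rpow (ht.lintegral_enorm_rpow_le hγβ hr) (by positivity)
  calc ∫⁻ ω, (∫⁻ t, ‖Y t ω‖ₑ ^ p ∂μ) ^ (r / p) ∂P
      ≤ (∫⁻ t, (∫⁻ ω, (‖Y t ω‖ₑ ^ p) ^ (r / p) ∂P) ^ (1 / (r / p)) ∂μ) ^ (r / p) :=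
        lintegral_lintegral_rpow_le (hY.enorm.pow_const p) ((one_le_div hp).2 hpr)
    _ ≤ (∫⁻ t, C ^ (1 / (r / p)) * τ t ^ p ∂μ) ^ (r / p) :=
        ENNReal.rpow_le_rpow (lintegral_mono_ae hmoment) hs0.le
    _ = C * (∫⁻ t, τ t ^ p ∂μ) ^ (r / p) := by
        rw [lintegral_const_mul' _ _
            (ENNReal.rpow_ne_top_of_nonneg (by positivity) ENNReal.ofReal_ne_top),
          ENNReal.mul_rpow_of_nonneg _ _ hs0.le, ← ENNReal.rpow_mul,
          one_div_mul_cancel hs0.ne', ENNReal.rpow_one]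

lemma measure_ofReal_le_lintegral_enorm_rpow_le (hγβ : γ.HolderConjugate β)
    (hY : Measurable (Function.uncurry Y))
    (hsub : ∀ᵐ t ∂μ, IsSubPhi P (fun x => |x| ^ γ / γ) (Y t)) (hp : 0 < p) (hpr : p ≤ r)
    (hδ : 0 < δ)
    (hτ : ∫⁻ t, ENNReal.ofReal (tauPhi P (fun x => |x| ^ γ / γ) (Y t)) ^ p ∂μ ≤
      ENNReal.ofReal (δ / r ^ (p / β))) :
    P {ω | ENNReal.ofReal δ ≤ ∫⁻ t, ‖Y t ω‖ₑ ^ p ∂μ} ≤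
      ENNReal.ofReal (2 * Real.exp (-(r / β))) := by
  have hr : 0 < r := hp.trans_le hpr
  have hs0 : 0 < r / p := by positivity
  have hδs : 0 < δ ^ (r / p) := by positivity
  have hmeas : Measurable fun ω => (∫⁻ t, ‖Y t ω‖ₑ ^ p ∂μ) ^ (r / p) :=
    (hY.enorm.pow_const p).lintegral_prod_left'.pow_const _
  have hconst : 2 * (r / Real.exp 1) ^ (r / β) * (δ / r ^ (p / β)) ^ (r / p) =
      2 * Real.exp (-(r / β)) * δ ^ (r / p) := by
    have hexponent : p / β * (r / p) = r / β := by field_simp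
    rw [Real.div_rpow hr.le (by positivity), Real.div_rpow hδ.le (by positivity),
      ← Real.rpow_mul hr.le, hexponent, Real.exp_one_rpow, Real.exp_neg]
    field_simp
  calc P {ω | ENNReal.ofReal δ ≤ ∫⁻ t, ‖Y t ω‖ₑ ^ p ∂μ}
      = P {ω | ENNReal.ofReal (δ ^ (r / p)) ≤ (∫⁻ t, ‖Y t ω‖ₑ ^ p ∂μ) ^ (r / p)} := by
        simp only [← ENNReal.ofReal_rpow_of_pos hδ, ENNReal.rpow_le_rpow_iff hs0]
    _ ≤ (∫⁻ ω, (∫⁻ t, ‖Y t ω‖ₑ ^ p ∂μ) ^ (r / p) ∂P) / ENNReal.ofReal (δ ^ (r / p)) :=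
        meas_ge_le_lintegral_div hmeas.aemeasurable (ENNReal.ofReal_pos.2 hδs).ne'
          ENNReal.ofReal_ne_top
    _ ≤ ENNReal.ofReal (2 * (r / Real.exp 1) ^ (r / β)) *
          ENNReal.ofReal (δ / r ^ (p / β)) ^ (r / p) / ENNReal.ofReal (δ ^ (r / p)) := by
        grw [lintegral_lintegral_enorm_rpow_rpow_le hγβ hY hsub hp hpr, hτ]
    _ = ENNReal.ofReal (2 * Real.exp (-(r / β))) := by
        rw [ENNReal.ofReal_rpow_of_pos (by positivity), ← ENNReal.ofReal_mul (by positivity),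
          hconst, ← ENNReal.ofReal_div_of_pos hδs, mul_div_cancel_right₀ _ hδs.ne']

theorem statement2_general {α : ℝ} (hγβ : γ.HolderConjugate β)
    (hY : Measurable (Function.uncurry Y))
    (hsub : ∀ᵐ t ∂μ, IsSubPhi P (fun x => |x| ^ γ / γ) (Y t))
    (hp : 0 < p) (hδ : 0 < δ) (hα : 0 < α)
    (hint : Integrable (fun t => tauPhi P (fun x => |x| ^ γ / γ) (Y t) ^ p) μ)
    (hc_log : ∫ t, tauPhi P (fun x => |x| ^ γ / γ) (Y t) ^ p ∂μ ≤
      δ / (β * Real.log (2 / α)) ^ (p / β))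
    (hc_p : ∫ t, tauPhi P (fun x => |x| ^ γ / γ) (Y t) ^ p ∂μ ≤ δ / p ^ (p / β)) :
    P {ω | δ < ∫ t, |Y t ω| ^ p ∂μ} ≤ ENNReal.ofReal α := by
  set r := max p (β * Real.log (2 / α))
  have hβ : 0 < β := hγβ.symm.pos
  have hc : ∫ t, tauPhi P (fun x => |x| ^ γ / γ) (Y t) ^ p ∂μ ≤ δ / r ^ (p / β) := by
    rcases max_choice p (β * Real.log (2 / α)) with h | h <;> simpa only [r, h]
  have hτ : ∫⁻ t, ENNReal.ofReal (tauPhi P (fun x => |x| ^ γ / γ) (Y t)) ^ p ∂μ ≤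
      ENNReal.ofReal (δ / r ^ (p / β)) := by
    simp only [ENNReal.ofReal_rpow_of_nonneg (tauPhi_nonneg P _ _) hp.le]
    rw [← ofReal_integral_eq_lintegral_ofReal hint
      (ae_of_all _ fun t => Real.rpow_nonneg (tauPhi_nonneg P _ _) p)]
    exact ENNReal.ofReal_le_ofReal hc
  have hsubset : {ω | δ < ∫ t, |Y t ω| ^ p ∂μ} ⊆
      {ω | ENNReal.ofReal δ ≤ ∫⁻ t, ‖Y t ω‖ₑ ^ p ∂μ} := by
    intro ω hω
    exact (ENNReal.ofReal_le_ofReal (le_of_lt hω)).trans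
      (ofReal_integral_abs_rpow_le_lintegral_enorm_rpow μ (Y · ω) hp.le)
  have hexp : 2 * Real.exp (-(r / β)) ≤ α := by
    have hlog : Real.log (2 / α) ≤ r / β := (le_div_iff₀' hβ).2 (le_max_right _ _)
    calc 2 * Real.exp (-(r / β)) ≤ 2 * Real.exp (-Real.log (2 / α)) := by gcongr
      _ = α := by rw [Real.exp_neg, Real.exp_log (by positivity)]; field_simp
  calc P {ω | δ < ∫ t, |Y t ω| ^ p ∂μ}
      ≤ P {ω | ENNReal.ofReal δ ≤ ∫⁻ t, ‖Y t ω‖ₑ ^ p ∂μ} := measure_mono hsubset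
    _ ≤ ENNReal.ofReal (2 * Real.exp (-(r / β))) :=
        measure_ofReal_le_lintegral_enorm_rpow_le hγβ hY hsub hp (le_max_left _ _) hδ hτ
    _ ≤ ENNReal.ofReal α := ENNReal.ofReal_le_ofReal hexp

end Tail

/-- Theorem 3: modelling with given reliability and accuracy in `L_p(0,T)` for
`φ(t) = |t|^γ/γ`, `1 < γ ≤ 2`. -/
theorem statement2 {Ω : Type*} [MeasurableSpace Ω]
    (P : Measure Ω) [IsProbabilityMeasure P]
    (γ β : ℝ) (hγ1 : 1 < γ) (hγ2 : γ ≤ 2) (hβ : 0 < β) (hβγ : 1 / β + 1 / γ = 1)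
    (T : ℝ) (hT : 0 < T)
    (X XN : ℝ → Ω → ℝ)
    (hX : Measurable (Function.uncurry X)) (hXN : Measurable (Function.uncurry XN))
    (hsub : ∀ t ∈ Set.Icc (0:ℝ) T,
      IsSubPhi P (fun x => |x| ^ γ / γ) (fun ω => X t ω - XN t ω))
    (p δ α : ℝ) (hp : 1 ≤ p) (hδ : 0 < δ) (hα : α ∈ Set.Ioo (0:ℝ) 1)
    (cN : ℝ)
    (hcN : cN = ∫ t in Set.Ioc 0 T,
      tauPhi P (fun x => |x| ^ γ / γ) (fun ω => X t ω - XN t ω) ^ p)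
    (hint : IntegrableOn
      (fun t => tauPhi P (fun x => |x| ^ γ / γ) (fun ω => X t ω - XN t ω) ^ p)
      (Set.Ioc 0 T))
    (h1 : cN ≤ δ / (β * Real.log (2 / α)) ^ (p / β))
    (h2 : cN < δ / p ^ (p * (1 - 1 / γ))) :
    P {ω | δ < ∫ t in Set.Ioc 0 T, |X t ω - XN t ω| ^ p} ≤ ENNReal.ofReal α := by
  have hγβ : γ.HolderConjugate β :=
    Real.holderConjugate_iff.2 ⟨hγ1, by simpa only [one_div, add_comm] using hβγ⟩
  have hexponent : p * (1 - 1 / γ) = p / β := by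
    rw [one_div, hγβ.one_sub_inv, div_eq_mul_inv]
  rw [hexponent] at h2
  subst hcN
  exact statement2_general hγβ (hX.sub hXN)
    ((ae_restrict_mem measurableSet_Ioc).mono fun t ht => hsub t (Ioc_subset_Icc_self ht))
    (by linarith) hδ hα.1 hint h1 h2.le
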